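/- arXiv:1211.6499 — 2 statements merged into one kernel-verified Lean document; each statement's English description precedes it below -/
import Mathlib

section
/- Lemma 2.1(ii): Let (u,v) be a classical solution of problem (1.1) on [0,T), written in radial coordinates as u(r,t), v(r,t). Then the radial derivatives satisfy u_r(r,t) ≥ 0 and v_r(r,t) ≥ 0 for all (r,t) ∈ [0,R] × (0,T). -/
open Set Real Metric MeasureTheory Filter Topology

/-- The Euclidean Laplacian of `f : ℝⁿ → ℝ` at `x`, computed as the sum of second
directional derivatives along the coordinate directions. -/
noncomputable def lap {n : ℕ} (f : EuclideanSpace ℝ (Fin n) → ℝ)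
    (x : EuclideanSpace ℝ (Fin n)) : ℝ :=
  ∑ i : Fin n, iteratedDeriv 2 (fun s : ℝ => f (x + s • EuclideanSpace.single i (1 : ℝ))) 0

/-- The outward normal derivative `∇f · (x/R)` on the sphere of radius `R`. -/
noncomputable def normalDeriv {n : ℕ} (R : ℝ) (f : EuclideanSpace ℝ (Fin n) → ℝ)
    (x : EuclideanSpace ℝ (Fin n)) : ℝ :=
  deriv (fun s : ℝ => f (x + s • (R⁻¹ • x))) 0

/-- Admissible initial data for problem (1.1): nonnegative, smooth, radial with
nondecreasing radial profiles, and satisfying the compatibility conditions. -/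
structure AdmissibleData (n : ℕ) (R : ℝ)
    (u₀ v₀ : EuclideanSpace ℝ (Fin n) → ℝ) : Prop where
  u0_nonneg : ∀ x ∈ closedBall (0 : EuclideanSpace ℝ (Fin n)) R, 0 ≤ u₀ x
  v0_nonneg : ∀ x ∈ closedBall (0 : EuclideanSpace ℝ (Fin n)) R, 0 ≤ v₀ x
  u0_smooth : ContDiffOn ℝ (⊤ : ℕ∞) u₀ (closedBall (0 : EuclideanSpace ℝ (Fin n)) R)
  v0_smooth : ContDiffOn ℝ (⊤ : ℕ∞) v₀ (closedBall (0 : EuclideanSpace ℝ (Fin n)) R)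
  u0_radial_mono : ∀ x ∈ closedBall (0 : EuclideanSpace ℝ (Fin n)) R,
    ∀ y ∈ closedBall (0 : EuclideanSpace ℝ (Fin n)) R, ‖x‖ ≤ ‖y‖ → u₀ x ≤ u₀ y
  v0_radial_mono : ∀ x ∈ closedBall (0 : EuclideanSpace ℝ (Fin n)) R,
    ∀ y ∈ closedBall (0 : EuclideanSpace ℝ (Fin n)) R, ‖x‖ ≤ ‖y‖ → v₀ x ≤ v₀ y
  compat_u : ∀ x : EuclideanSpace ℝ (Fin n), ‖x‖ = R → normalDeriv R u₀ x = Real.exp (v₀ x)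
  compat_v : ∀ x : EuclideanSpace ℝ (Fin n), ‖x‖ = R → normalDeriv R v₀ x = Real.exp (u₀ x)
  compat_u' : ∀ x ∈ closedBall (0 : EuclideanSpace ℝ (Fin n)) R, 0 ≤ lap u₀ x + Real.exp (v₀ x)
  compat_v' : ∀ x ∈ closedBall (0 : EuclideanSpace ℝ (Fin n)) R, 0 ≤ lap v₀ x + Real.exp (u₀ x)

/-- A classical solution of problem (1.1) on `[0,T)` on the ball of radius `R`:
continuous on `cl(B_R) × [0,T)`, of class C²,¹ on `cl(B_R) × (0,T)`, satisfying the
equations `u_t = Δu + λ₁ e^v`, `v_t = Δv + λ₂ e^u` in `B_R × (0,T)`, the boundary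
conditions `∂u/∂η = e^v`, `∂v/∂η = e^u` on `∂B_R × (0,T)`, and the initial conditions. -/
structure IsClassicalSolution (n : ℕ) (R T lam1 lam2 : ℝ)
    (u v : EuclideanSpace ℝ (Fin n) → ℝ → ℝ)
    (u₀ v₀ : EuclideanSpace ℝ (Fin n) → ℝ) : Prop where
  cont_u : ContinuousOn (fun p : EuclideanSpace ℝ (Fin n) × ℝ => u p.1 p.2)
    ((closedBall (0 : EuclideanSpace ℝ (Fin n)) R) ×ˢ Ico (0 : ℝ) T)
  cont_v : ContinuousOn (fun p : EuclideanSpace ℝ (Fin n) × ℝ => v p.1 p.2)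
    ((closedBall (0 : EuclideanSpace ℝ (Fin n)) R) ×ˢ Ico (0 : ℝ) T)
  reg_space_u : ∀ t ∈ Ioo (0 : ℝ) T,
    ContDiffOn ℝ 2 (fun x => u x t) (closedBall (0 : EuclideanSpace ℝ (Fin n)) R)
  reg_space_v : ∀ t ∈ Ioo (0 : ℝ) T,
    ContDiffOn ℝ 2 (fun x => v x t) (closedBall (0 : EuclideanSpace ℝ (Fin n)) R)
  reg_time_u : ∀ x ∈ closedBall (0 : EuclideanSpace ℝ (Fin n)) R, ∀ t ∈ Ioo (0 : ℝ) T,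
    DifferentiableAt ℝ (u x) t
  reg_time_v : ∀ x ∈ closedBall (0 : EuclideanSpace ℝ (Fin n)) R, ∀ t ∈ Ioo (0 : ℝ) T,
    DifferentiableAt ℝ (v x) t
  pde_u : ∀ x ∈ ball (0 : EuclideanSpace ℝ (Fin n)) R, ∀ t ∈ Ioo (0 : ℝ) T,
    deriv (u x) t = lap (fun y => u y t) x + lam1 * Real.exp (v x t)
  pde_v : ∀ x ∈ ball (0 : EuclideanSpace ℝ (Fin n)) R, ∀ t ∈ Ioo (0 : ℝ) T,
    deriv (v x) t = lap (fun y => v y t) x + lam2 * Real.exp (u x t)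
  bc_u : ∀ x : EuclideanSpace ℝ (Fin n), ‖x‖ = R → ∀ t ∈ Ioo (0 : ℝ) T,
    normalDeriv R (fun y => u y t) x = Real.exp (v x t)
  bc_v : ∀ x : EuclideanSpace ℝ (Fin n), ‖x‖ = R → ∀ t ∈ Ioo (0 : ℝ) T,
    normalDeriv R (fun y => v y t) x = Real.exp (u x t)
  init_u : ∀ x ∈ closedBall (0 : EuclideanSpace ℝ (Fin n)) R, u x 0 = u₀ x
  init_v : ∀ x ∈ closedBall (0 : EuclideanSpace ℝ (Fin n)) R, v x 0 = v₀ x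

/-- `(u,v)` blows up at time `T`: `limsup_{t→T⁻} sup_{cl(B_R)} (u(·,t) + v(·,t)) = ∞`. -/
def BlowsUpAt (n : ℕ) (R T : ℝ) (u v : EuclideanSpace ℝ (Fin n) → ℝ → ℝ) : Prop :=
  ∀ M : ℝ, ∃ᶠ t in 𝓝[<] T, ∃ x ∈ closedBall (0 : EuclideanSpace ℝ (Fin n)) R, M < u x t + v x t

/-!
Radiality and monotonicity of `u(·, t)` and `v(·, t)` together say that `u x t ≤ u y t` and
`v x t ≤ v y t` whenever `‖x‖ ≤ ‖y‖ ≤ R`. This is a maximum principle on such pairs. Raise both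
increments by `ε e^{Kt} h y`, with `h` a barrier of large flux through the sphere, and look at the
first time one of them vanishes, at a pair `(x, y)`.

* If `‖y‖ < R`, move `x` and `y` simultaneously, by `z` and `A z`, where the isometry `A` takes `x`
  to `y` when `‖x‖ = ‖y‖` and is the identity otherwise. The pair stays ordered, so minimality
  compares the two Laplacians, and for large `K` the growth of the barrier in time contradicts the
  equation.
* If `‖y‖ = R`, move `y` inwards, together with `x` when `‖x‖ = R` as well. The flux of the barrier
  contradicts the boundary condition.

The system is cooperative: a lower bound on the increment of `v` bounds that of `exp v` from below.
-/

open scoped Laplacian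

section Calculus

theorem nonpos_of_hasDerivAt_of_isLocalMinOn_Iic {f : ℝ → ℝ} {f' a : ℝ}
    (hf : HasDerivAt f f' a) (hmin : IsLocalMinOn f (Iic a) a) : f' ≤ 0 := by
  have hcone : (-1 : ℝ) ∈ posTangentConeAt (Iic a) a :=
    mem_posTangentConeAt_of_segment_subset <| by
      rw [segment_symm, segment_eq_Icc (by linarith)]
      exact Icc_subset_Iic_self
  simpa using hmin.hasFDerivWithinAt_nonneg hf.hasFDerivAt.hasFDerivWithinAt hcone

theorem iteratedDeriv_two_nonneg_of_isLocalMin {f : ℝ → ℝ} {a : ℝ} (hf : ContinuousAt f a)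
    (hmin : IsLocalMin f a) : 0 ≤ iteratedDeriv 2 f a := by
  rw [iteratedDeriv_succ, iteratedDeriv_one]
  by_contra! hneg
  have hmax : IsLocalMax f a := isLocalMax_of_deriv_deriv_neg hneg hmin.deriv_eq_zero hf
  have hconst : f =ᶠ[𝓝 a] fun _ => f a := by
    filter_upwards [hmin, hmax] with y hy hy' using le_antisymm hy' hy
  have hzero : deriv (deriv f) a = 0 := by simpa using hconst.deriv.deriv_eq
  exact hneg.ne hzero

theorem iteratedDeriv_two_comp_add_smul {E F : Type*} [NormedAddCommGroup E] [NormedSpace ℝ E]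
    [NormedAddCommGroup F] [NormedSpace ℝ F] {f : E → F} {x : E} (hf : ContDiffAt ℝ 2 f x)
    (e : E) : iteratedDeriv 2 (fun s : ℝ => f (x + s • e)) 0 = iteratedFDeriv ℝ 2 f x ![e, e] := by
  have hline (s : ℝ) : HasDerivAt (fun s : ℝ => x + s • e) e s := by
    simpa using ((hasDerivAt_id s).smul_const e).const_add x
  have hx : x + (0 : ℝ) • e = x := by rw [zero_smul, add_zero]
  have hdiff : ∀ᶠ s : ℝ in 𝓝 0, DifferentiableAt ℝ f (x + s • e) := by
    have hnhds : ∀ᶠ y in 𝓝 (x + (0 : ℝ) • e), ContDiffAt ℝ 2 f y := by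
      rw [hx]
      exact hf.eventually (by simp)
    filter_upwards [(hline 0).continuousAt.eventually hnhds] with s hs
    exact hs.differentiableAt two_ne_zero
  have hderiv : deriv (fun s : ℝ => f (x + s • e)) =ᶠ[𝓝 0] fun s => fderiv ℝ f (x + s • e) e := by
    filter_upwards [hdiff] with s hs
    exact (hs.hasFDerivAt.comp_hasDerivAt s (hline s)).deriv
  have hfderiv : HasDerivAt (fun s : ℝ => fderiv ℝ f (x + s • e))
      (fderiv ℝ (fderiv ℝ f) x e) 0 := by
    refine HasFDerivAt.comp_hasDerivAt (0 : ℝ) ?_ (hline 0)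
    rw [hx]
    exact ((hf.fderiv_right (m := 1) le_rfl).differentiableAt one_ne_zero).hasFDerivAt
  rw [iteratedDeriv_succ, iteratedDeriv_one, hderiv.deriv_eq, iteratedFDeriv_two_apply,
    (hfderiv.clm_apply (hasDerivAt_const (0 : ℝ) e)).deriv]
  simp

variable {E F : Type*} [NormedAddCommGroup E] [InnerProductSpace ℝ E] [FiniteDimensional ℝ E]
  [NormedAddCommGroup F] [InnerProductSpace ℝ F] [FiniteDimensional ℝ F]

theorem laplacian_le_laplacian_of_isLocalMin_sub {f : F → ℝ} {g : E → ℝ} {x : E} {y : F}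
    (A : E ≃ₗᵢ[ℝ] F) (hf : ContDiffAt ℝ 2 f y) (hg : ContDiffAt ℝ 2 g x)
    (hmin : IsLocalMin (fun z => f (y + A z) - g (x + z)) 0) : Δ g x ≤ Δ f y := by
  set b := stdOrthonormalBasis ℝ E
  rw [InnerProductSpace.laplacian_eq_iteratedFDeriv_orthonormalBasis g b,
    InnerProductSpace.laplacian_eq_iteratedFDeriv_orthonormalBasis f (b.map A)]
  refine Finset.sum_le_sum fun i _ => ?_
  rw [← iteratedDeriv_two_comp_add_smul hg, ← iteratedDeriv_two_comp_add_smul hf, ← sub_nonneg]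
  have hf' : ContDiffAt ℝ 2 (fun s : ℝ => f (y + s • b.map A i)) 0 :=
    ContDiffAt.comp (0 : ℝ) (by simpa using hf) (by fun_prop)
  have hg' : ContDiffAt ℝ 2 (fun s : ℝ => g (x + s • b i)) 0 :=
    ContDiffAt.comp (0 : ℝ) (by simpa using hg) (by fun_prop)
  rw [← iteratedDeriv_fun_sub hf' hg']
  refine iteratedDeriv_two_nonneg_of_isLocalMin (hf'.sub hg').continuousAt ?_
  have hline : Tendsto (fun s : ℝ => s • b i) (𝓝 0) (𝓝 0) :=
    Continuous.tendsto' (by fun_prop) 0 0 (zero_smul ℝ _)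
  filter_upwards [hline.eventually hmin] with s hs
  simpa using hs

theorem lap_eq_laplacian {n : ℕ} {f : EuclideanSpace ℝ (Fin n) → ℝ}
    {x : EuclideanSpace ℝ (Fin n)} (hf : ContDiffAt ℝ 2 f x) : lap f x = Δ f x := by
  rw [InnerProductSpace.laplacian_eq_iteratedFDeriv_orthonormalBasis f
    (EuclideanSpace.basisFun (Fin n) ℝ)]
  refine Finset.sum_congr rfl fun i _ => ?_
  rw [iteratedDeriv_two_comp_add_smul hf, EuclideanSpace.basisFun_apply]

end Calculus

section OrderedPairs

/-- `f` is radial with nondecreasing profile on the closed ball of radius `R`; radiality is the case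
`‖x‖ = ‖y‖` of the inequality. -/
def RadiallyMonotone {E : Type*} [Norm E] (R : ℝ) (f : E → ℝ) : Prop :=
  ∀ ⦃x y⦄, ‖x‖ ≤ ‖y‖ → ‖y‖ ≤ R → f x ≤ f y

theorem RadiallyMonotone.derivWithin_smul_nonneg {E : Type*} [NormedAddCommGroup E]
    [NormedSpace ℝ E] {R : ℝ} {f : E → ℝ} (hf : RadiallyMonotone R f) {e : E} (he : ‖e‖ = 1)
    (r : ℝ) : 0 ≤ derivWithin (fun ρ : ℝ => f (ρ • e)) (Icc 0 R) r := by
  have hnorm (ρ : ℝ) (hρ : ρ ∈ Icc 0 R) : ‖ρ • e‖ = ρ := by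
    rw [norm_smul, he, mul_one, Real.norm_of_nonneg hρ.1]
  refine MonotoneOn.derivWithin_nonneg fun a ha b hb hab => hf ?_ ((hnorm b hb).trans_le hb.2)
  rwa [hnorm a ha, hnorm b hb]

/-- The pairs `(x, y)` in the closed ball of radius `R` with `‖x‖ ≤ ‖y‖`, on which the maximum
principle is applied. -/
def orderedPairs (E : Type*) [NormedAddCommGroup E] (R : ℝ) : Set (E × E) :=
  {p | ‖p.1‖ ≤ ‖p.2‖ ∧ ‖p.2‖ ≤ R}

variable {E : Type*} [NormedAddCommGroup E] {R : ℝ}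

theorem orderedPairs_subset_closedBall_prod :
    orderedPairs E R ⊆ closedBall 0 R ×ˢ closedBall 0 R := fun _ hp =>
  ⟨mem_closedBall_zero_iff.2 (hp.1.trans hp.2), mem_closedBall_zero_iff.2 hp.2⟩

theorem isCompact_orderedPairs [ProperSpace E] : IsCompact (orderedPairs E R) :=
  ((isCompact_closedBall 0 R).prod (isCompact_closedBall 0 R)).of_isClosed_subset
    ((isClosed_le continuous_fst.norm continuous_snd.norm).inter
      (isClosed_le continuous_snd.norm continuous_const))
    orderedPairs_subset_closedBall_prod

section Normal

variable [NormedSpace ℝ E] {f g : E → ℝ} {f' g' : ℝ} {x y : E}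

theorem norm_add_smul_inv_smul (hR : 0 < R) (hx : ‖x‖ = R) {s : ℝ} (hs : -R ≤ s) :
    ‖x + s • R⁻¹ • x‖ = R + s := by
  have hfactor : x + s • R⁻¹ • x = ((R + s) * R⁻¹) • x := by
    rw [add_mul, mul_inv_cancel₀ hR.ne', add_smul, one_smul, mul_smul]
  rw [hfactor, norm_smul, hx, norm_mul, norm_inv, Real.norm_of_nonneg hR.le,
    Real.norm_of_nonneg (neg_le_iff_add_nonneg'.1 hs), inv_mul_cancel_right₀ hR.ne']

theorem normal_lineDeriv_nonpos_of_isMinOn_orderedPairs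
    (hmin : IsMinOn (fun p => f p.2 - g p.1) (orderedPairs E R) (x, y)) (hxy : ‖x‖ < ‖y‖)
    (hy : ‖y‖ = R) (hf : HasLineDerivAt ℝ f f' y (R⁻¹ • y)) : f' ≤ 0 := by
  refine nonpos_of_hasDerivAt_of_isLocalMinOn_Iic hf ?_
  have hx : 0 ≤ ‖x‖ := norm_nonneg x
  filter_upwards [Ioc_mem_nhdsLE (show ‖x‖ - R < 0 by linarith)] with s ⟨hxs, hs⟩
  have hnorm : ‖y + s • R⁻¹ • y‖ = R + s := norm_add_smul_inv_smul (by linarith) hy (by linarith)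
  have hmem : (x, y + s • R⁻¹ • y) ∈ orderedPairs E R :=
    ⟨by dsimp only; linarith, by dsimp only; linarith⟩
  simpa using hmin hmem

theorem normal_lineDeriv_le_of_isMinOn_orderedPairs (hR : 0 < R)
    (hmin : IsMinOn (fun p => f p.2 - g p.1) (orderedPairs E R) (x, y)) (hx : ‖x‖ = R)
    (hy : ‖y‖ = R) (hf : HasLineDerivAt ℝ f f' y (R⁻¹ • y))
    (hg : HasLineDerivAt ℝ g g' x (R⁻¹ • x)) : f' ≤ g' := by
  rw [← sub_nonpos]
  refine nonpos_of_hasDerivAt_of_isLocalMinOn_Iic (HasDerivAt.fun_sub hf hg) ?_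
  filter_upwards [Ioc_mem_nhdsLE (neg_lt_zero.2 hR)] with s ⟨hRs, hs⟩
  have hmem : (x + s • R⁻¹ • x, y + s • R⁻¹ • y) ∈ orderedPairs E R := by
    simp only [orderedPairs, mem_ofPred_eq, norm_add_smul_inv_smul hR hx hRs.le,
      norm_add_smul_inv_smul hR hy hRs.le]
    exact ⟨le_rfl, by linarith⟩
  simpa using hmin hmem

end Normal

variable [InnerProductSpace ℝ E] {x y : E}

theorem exists_linearIsometryEquiv_eventually_mem_orderedPairs (hxy : ‖x‖ ≤ ‖y‖) (hy : ‖y‖ < R) :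
    ∃ A : E ≃ₗᵢ[ℝ] E, ∀ᶠ z in 𝓝 0, (x + z, y + A z) ∈ orderedPairs E R := by
  have hball (A : E ≃ₗᵢ[ℝ] E) : ∀ᶠ z in 𝓝 0, ‖y + A z‖ < R :=
    ContinuousAt.eventually_lt (by fun_prop) continuousAt_const (by simpa using hy)
  rcases hxy.eq_or_lt with heq | hlt
  · refine ⟨(ℝ ∙ (x - y))ᗮ.reflection, (hball _).mono fun z hz => ⟨?_, hz.le⟩⟩
    have hmap : y + (ℝ ∙ (x - y))ᗮ.reflection z = (ℝ ∙ (x - y))ᗮ.reflection (x + z) := by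
      rw [map_add, Submodule.reflection_sub heq]
    dsimp only
    rw [hmap, LinearIsometryEquiv.norm_map]
  · have hnorm : ∀ᶠ z : E in 𝓝 0, ‖x + z‖ < ‖y + z‖ :=
      ContinuousAt.eventually_lt (by fun_prop) (by fun_prop) (by simpa using hlt)
    exact ⟨.refl ℝ E, hnorm.and (hball _) |>.mono fun z hz => ⟨hz.1.le, hz.2.le⟩⟩

theorem laplacian_le_laplacian_of_isMinOn_orderedPairs [FiniteDimensional ℝ E] {f g : E → ℝ}
    (hmin : IsMinOn (fun p => f p.2 - g p.1) (orderedPairs E R) (x, y)) (hxy : ‖x‖ ≤ ‖y‖)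
    (hy : ‖y‖ < R) (hf : ContDiffAt ℝ 2 f y) (hg : ContDiffAt ℝ 2 g x) : Δ g x ≤ Δ f y := by
  obtain ⟨A, hA⟩ := exists_linearIsometryEquiv_eventually_mem_orderedPairs hxy hy
  refine laplacian_le_laplacian_of_isLocalMin_sub A hf hg ?_
  filter_upwards [hA] with z hz
  simpa using hmin hz

end OrderedPairs

section FirstContact

theorem exists_first_contact {X : Type*} [TopologicalSpace X] [T2Space X] {K : Set X}
    (hK : IsCompact K) {τ : ℝ} {f : X → ℝ → ℝ}
    (hf : ContinuousOn (fun p : X × ℝ => f p.1 p.2) (K ×ˢ Icc 0 τ))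
    (hinit : ∀ x ∈ K, 0 < f x 0) (hneg : ∃ x ∈ K, ∃ t ∈ Icc 0 τ, f x t ≤ 0) :
    ∃ t ∈ Ioc 0 τ, (∃ x ∈ K, f x t = 0) ∧ ∀ x ∈ K, ∀ s ∈ Icc 0 t, 0 ≤ f x s := by
  set S : Set (X × ℝ) := K ×ˢ Icc 0 τ ∩ (fun p => f p.1 p.2) ⁻¹' Iic 0
  have hKτ : IsCompact (K ×ˢ Icc (0 : ℝ) τ) := hK.prod isCompact_Icc
  have hS : IsCompact S := hKτ.of_isClosed_subset
    (hf.preimage_isClosed_of_isClosed hKτ.isClosed isClosed_Iic) inter_subset_left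
  obtain ⟨x, hx, t, ht, hxt⟩ := hneg
  obtain ⟨⟨x₀, t₀⟩, ⟨⟨hx₀, ht₀⟩, hle⟩, hfirst⟩ :=
    hS.exists_isMinOn ⟨(x, t), ⟨hx, ht⟩, hxt⟩ continuousOn_snd
  have hpos : t₀ ≠ 0 := fun h => (hinit x₀ hx₀).not_ge (h ▸ hle)
  have hbefore : ∀ y ∈ K, ∀ s ∈ Ico 0 t₀, 0 ≤ f y s := fun y hy s hs => by
    by_contra! hlt
    exact hs.2.not_ge (hfirst (a := (y, s)) ⟨⟨hy, hs.1, hs.2.le.trans ht₀.2⟩, hlt.le⟩)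
  have hnonneg : ∀ y ∈ K, ∀ s ∈ Icc 0 t₀, 0 ≤ f y s := fun y hy s hs => by
    have hcont : ContinuousOn (f y) (Icc 0 t₀) :=
      hf.comp (f := fun r => (y, r)) (by fun_prop) fun r hr => ⟨hy, hr.1, hr.2.trans ht₀.2⟩
    rw [← closure_Ico hpos.symm] at hcont hs
    exact le_on_closure (hbefore y hy) continuousOn_const hcont hs
  exact ⟨t₀, ⟨ht₀.1.lt_of_ne' hpos, ht₀.2⟩,
    ⟨x₀, hx₀, le_antisymm hle (hnonneg x₀ hx₀ t₀ ⟨ht₀.1, le_rfl⟩)⟩, hnonneg⟩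

end FirstContact

section Barrier

variable {E : Type*} [NormedAddCommGroup E] [InnerProductSpace ℝ E]

theorem fderiv_exp_mul_norm_sq_apply (α : ℝ) (x v : E) :
    fderiv ℝ (fun x : E => exp (α * ‖x‖ ^ 2)) x v = exp (α * ‖x‖ ^ 2) * (2 * α * inner ℝ x v) := by
  rw [((hasStrictFDerivAt_norm_sq x).hasFDerivAt.const_mul α).exp.fderiv]
  simp only [smul_apply, coe_innerSL_apply, nsmul_eq_mul, Nat.cast_ofNat, smul_eq_mul]
  ring

variable [FiniteDimensional ℝ E]

/-- A barrier for the ball of radius `R`: a positive function whose outward normal derivative on the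
sphere exceeds `L` times its value and whose Laplacian is at most `M` times its value. A small
multiple of it, growing fast enough in time, absorbs an `L`-Lipschitz boundary flux. -/
structure IsFluxBarrier (R L M : ℝ) (h : E → ℝ) : Prop where
  contDiff : ContDiff ℝ 2 h
  pos : ∀ x, 0 < h x
  laplacian_le : ∀ x, ‖x‖ ≤ R → Δ h x ≤ M * h x
  flux : ∀ x, ‖x‖ = R → L * h x < fderiv ℝ h x (R⁻¹ • x)

theorem continuous_laplacian {h : E → ℝ} (hh : ContDiff ℝ 2 h) : Continuous (Δ h) := by
  rw [InnerProductSpace.laplacian_eq_iteratedFDeriv_stdOrthonormalBasis]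
  have := hh.continuous_iteratedFDeriv (m := 2) le_rfl
  fun_prop

theorem exists_laplacian_le_mul {h : E → ℝ} (hh : ContDiff ℝ 2 h) (hpos : ∀ x, 0 < h x) (R : ℝ) :
    ∃ M, ∀ x, ‖x‖ ≤ R → Δ h x ≤ M * h x := by
  have hcont : Continuous fun x => Δ h x / h x :=
    (continuous_laplacian hh).div hh.continuous fun x => (hpos x).ne'
  obtain ⟨M, hM⟩ := (isCompact_closedBall (0 : E) R).bddAbove_image hcont.continuousOn
  refine ⟨M, fun x hx => (div_le_iff₀ (hpos x)).1 (hM ⟨x, ?_, rfl⟩)⟩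
  simpa using hx

theorem exists_isFluxBarrier {R : ℝ} (hR : 0 < R) (L : ℝ) :
    ∃ M, ∃ h : E → ℝ, IsFluxBarrier R L M h := by
  set h : E → ℝ := fun x => exp ((L + 1) / (2 * R) * ‖x‖ ^ 2)
  have hcont : ContDiff ℝ 2 h := (contDiff_const.mul (contDiff_norm_sq ℝ)).exp
  have hpos (x : E) : 0 < h x := exp_pos _
  obtain ⟨M, hM⟩ := exists_laplacian_le_mul hcont hpos R
  refine ⟨M, h, hcont, hpos, hM, fun x hx => ?_⟩
  have hinner : inner ℝ x (R⁻¹ • x) = R := by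
    rw [real_inner_smul_right, real_inner_self_eq_norm_mul_norm, hx, inv_mul_cancel_left₀ hR.ne']
  calc L * h x < (L + 1) * h x := by linarith [hpos x]
    _ = h x * (2 * ((L + 1) / (2 * R)) * R) := by field_simp
    _ = fderiv ℝ h x (R⁻¹ • x) := by rw [fderiv_exp_mul_norm_sq_apply, hinner]

end Barrier

section System

theorem neg_mul_le_exp_sub_exp {a b L d : ℝ} (hL : exp b ≤ L) (hd : 0 ≤ d) (hab : b - d ≤ a) :
    -(L * d) ≤ exp a - exp b := by
  have htangent : exp b * (a - b + 1) ≤ exp a := by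
    calc exp b * (a - b + 1) ≤ exp b * exp (a - b) := by gcongr; exact add_one_le_exp _
      _ = exp a := by rw [← exp_add, add_sub_cancel]
  have hscale : exp b * d ≤ L * d := by gcongr
  have hshift : exp b * -d ≤ exp b * (a - b) := by gcongr; linarith
  linarith

variable {n : ℕ} {R T lam1 lam2 : ℝ} {u v : EuclideanSpace ℝ (Fin n) → ℝ → ℝ}
  {u₀ v₀ : EuclideanSpace ℝ (Fin n) → ℝ}

theorem AdmissibleData.radiallyMonotone_u₀ (hdata : AdmissibleData n R u₀ v₀) :
    RadiallyMonotone R u₀ := fun x y hxy hy =>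
  hdata.u0_radial_mono x (mem_closedBall_zero_iff.2 (hxy.trans hy)) y
    (mem_closedBall_zero_iff.2 hy) hxy

theorem AdmissibleData.radiallyMonotone_v₀ (hdata : AdmissibleData n R u₀ v₀) :
    RadiallyMonotone R v₀ := fun x y hxy hy =>
  hdata.v0_radial_mono x (mem_closedBall_zero_iff.2 (hxy.trans hy)) y
    (mem_closedBall_zero_iff.2 hy) hxy

namespace IsClassicalSolution

theorem swap (hsol : IsClassicalSolution n R T lam1 lam2 u v u₀ v₀) :
    IsClassicalSolution n R T lam2 lam1 v u v₀ u₀ :=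
  ⟨hsol.cont_v, hsol.cont_u, hsol.reg_space_v, hsol.reg_space_u, hsol.reg_time_v, hsol.reg_time_u,
    hsol.pde_v, hsol.pde_u, hsol.bc_v, hsol.bc_u, hsol.init_v, hsol.init_u⟩

theorem contDiffAt_u (hsol : IsClassicalSolution n R T lam1 lam2 u v u₀ v₀)
    {x : EuclideanSpace ℝ (Fin n)} (hx : ‖x‖ < R) {t : ℝ} (ht : t ∈ Ioo 0 T) :
    ContDiffAt ℝ 2 (u · t) x :=
  (hsol.reg_space_u t ht).contDiffAt (closedBall_mem_nhds_of_mem (mem_ball_zero_iff.2 hx))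

theorem hasDerivAt_u (hsol : IsClassicalSolution n R T lam1 lam2 u v u₀ v₀)
    {x : EuclideanSpace ℝ (Fin n)} (hx : ‖x‖ < R) {t : ℝ} (ht : t ∈ Ioo 0 T) :
    HasDerivAt (u x) (Δ (u · t) x + lam1 * exp (v x t)) t := by
  rw [← lap_eq_laplacian (hsol.contDiffAt_u hx ht), ← hsol.pde_u x (mem_ball_zero_iff.2 hx) t ht]
  exact (hsol.reg_time_u x (mem_closedBall_zero_iff.2 hx.le) t ht).hasDerivAt

theorem hasLineDerivAt_u (hsol : IsClassicalSolution n R T lam1 lam2 u v u₀ v₀)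
    {x : EuclideanSpace ℝ (Fin n)} (hx : ‖x‖ = R) {t : ℝ} (ht : t ∈ Ioo 0 T) :
    HasLineDerivAt ℝ (u · t) (exp (v x t)) x (R⁻¹ • x) := by
  have hbc : deriv (fun s : ℝ => u (x + s • R⁻¹ • x) t) 0 = exp (v x t) := hsol.bc_u x hx t ht
  -- A nonzero normal derivative is not the junk value of `deriv`.
  have hne : deriv (fun s : ℝ => u (x + s • R⁻¹ • x) t) 0 ≠ 0 := hbc ▸ (exp_pos _).ne'
  exact hbc ▸ (differentiableAt_of_deriv_ne_zero hne).hasDerivAt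

theorem exists_exp_u_le (hsol : IsClassicalSolution n R T lam1 lam2 u v u₀ v₀) {τ : ℝ}
    (hτ : τ < T) : ∃ L, ∀ x, ‖x‖ ≤ R → ∀ t ∈ Icc 0 τ, exp (u x t) ≤ L := by
  have hK : IsCompact (closedBall (0 : EuclideanSpace ℝ (Fin n)) R ×ˢ Icc (0 : ℝ) τ) :=
    (isCompact_closedBall _ _).prod isCompact_Icc
  obtain ⟨L, hL⟩ := hK.bddAbove_image
    (hsol.cont_u.mono (prod_mono_right (Icc_subset_Ico_right hτ))).rexp
  exact ⟨L, fun x hx t ht => hL ⟨(x, t), ⟨mem_closedBall_zero_iff.2 hx, ht⟩, rfl⟩⟩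

end IsClassicalSolution

/-- The increment of `w(·, t)` along the pair `p = (x, y)`, raised by the multiple `ε e^{Kt}` of the
barrier `h` at `y`; it turns the weak inequality `w x t ≤ w y t` into a strict one that the first
contact argument can preserve. -/
noncomputable def pairGap {E : Type*} (ε K : ℝ) (h : E → ℝ) (w : E → ℝ → ℝ) (p : E × E)
    (t : ℝ) : ℝ :=
  w p.2 t + ε * exp (K * t) * h p.2 - w p.1 t

theorem continuousOn_pairGap {E : Type*} [NormedAddCommGroup E] {h : E → ℝ} {w : E → ℝ → ℝ}
    {I : Set ℝ} (hw : ContinuousOn (fun p : E × ℝ => w p.1 p.2) (closedBall 0 R ×ˢ I))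
    (hh : Continuous h) (ε K : ℝ) :
    ContinuousOn (fun q : (E × E) × ℝ => pairGap ε K h w q.1 q.2) (orderedPairs E R ×ˢ I) := by
  have hsnd : ContinuousOn (fun q : (E × E) × ℝ => w q.1.2 q.2) (orderedPairs E R ×ˢ I) :=
    hw.comp (f := fun q : (E × E) × ℝ => (q.1.2, q.2)) (by fun_prop) fun q hq =>
      ⟨(orderedPairs_subset_closedBall_prod hq.1).2, hq.2⟩
  have hfst : ContinuousOn (fun q : (E × E) × ℝ => w q.1.1 q.2) (orderedPairs E R ×ˢ I) :=
    hw.comp (f := fun q : (E × E) × ℝ => (q.1.1, q.2)) (by fun_prop) fun q hq =>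
      ⟨(orderedPairs_subset_closedBall_prod hq.1).1, hq.2⟩
  exact (hsnd.add (Continuous.continuousOn (by fun_prop))).sub hfst

theorem hasDerivAt_pairGap {E : Type*} {ε K : ℝ} {h : E → ℝ} {w : E → ℝ → ℝ} {x y : E}
    {t wx' wy' : ℝ} (hx : HasDerivAt (w x) wx' t) (hy : HasDerivAt (w y) wy' t) :
    HasDerivAt (pairGap ε K h w (x, y)) (wy' + K * (ε * exp (K * t) * h y) - wx') t := by
  have hexp : HasDerivAt (fun t => ε * exp (K * t) * h y) (K * (ε * exp (K * t) * h y)) t := by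
    refine ((((hasDerivAt_id t).const_mul K).exp.const_mul ε).mul_const (h y)).congr_deriv ?_
    rw [id_eq]
    ring
  exact (hy.add hexp).sub hx

variable {ε K L M t : ℝ} {h : EuclideanSpace ℝ (Fin n) → ℝ} {x y : EuclideanSpace ℝ (Fin n)}

namespace IsClassicalSolution

theorem not_isMinOn_pairGap_Icc (hsol : IsClassicalSolution n R T lam1 lam2 u v u₀ v₀)
    (hlam1 : 0 ≤ lam1) (hh : IsFluxBarrier R L M h) (hε : 0 < ε) (hK : lam1 * L + M < K)
    (ht : t ∈ Ioo 0 T) (hxy : ‖x‖ ≤ ‖y‖) (hy : ‖y‖ < R)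
    (hspace : IsMinOn (pairGap ε K h u · t) (orderedPairs _ R) (x, y))
    (hexp : -(L * (ε * exp (K * t) * h y)) ≤ exp (v y t) - exp (v x t)) :
    ¬IsMinOn (pairGap ε K h u (x, y)) (Icc 0 t) t := by
  intro htime
  set δ := ε * exp (K * t)
  have hδ : 0 < δ := by positivity
  have huy : ContDiffAt ℝ 2 (u · t) y := hsol.contDiffAt_u hy ht
  have hhy : ContDiffAt ℝ 2 (δ • h) y := contDiffAt_const.smul hh.contDiff.contDiffAt
  have hlap : Δ (u · t) x ≤ Δ (u · t) y + δ * Δ h y := by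
    have hle := laplacian_le_laplacian_of_isMinOn_orderedPairs (f := (u · t) + δ • h) hspace hxy hy
      (huy.add hhy) (hsol.contDiffAt_u (hxy.trans_lt hy) ht)
    rwa [huy.laplacian_add hhy, InnerProductSpace.laplacian_smul δ hh.contDiff.contDiffAt] at hle
  have hderiv : Δ (u · t) y + lam1 * exp (v y t) + K * (δ * h y)
      - (Δ (u · t) x + lam1 * exp (v x t)) ≤ 0 := nonpos_of_hasDerivAt_of_isLocalMinOn_Iic
    (hasDerivAt_pairGap (ε := ε) (K := K) (h := h) (hsol.hasDerivAt_u (hxy.trans_lt hy) ht)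
      (hsol.hasDerivAt_u hy ht))
    (htime.filter_mono (le_principal_iff.2 (Icc_mem_nhdsLE ht.1)))
  have hbarrier : δ * Δ h y ≤ δ * (M * h y) := by
    gcongr
    exact hh.laplacian_le y hy.le
  have hreaction : lam1 * -(L * (δ * h y)) ≤ lam1 * (exp (v y t) - exp (v x t)) :=
    mul_le_mul_of_nonneg_left hexp hlam1
  have hgrowth : (lam1 * L + M) * (δ * h y) < K * (δ * h y) :=
    mul_lt_mul_of_pos_right hK (mul_pos hδ (hh.pos y))
  linarith

theorem not_isMinOn_pairGap_of_norm_eq (hsol : IsClassicalSolution n R T lam1 lam2 u v u₀ v₀)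
    (hR : 0 < R) (hh : IsFluxBarrier R L M h) (hε : 0 < ε) (hL : 0 ≤ L)
    (ht : t ∈ Ioo 0 T) (hxy : ‖x‖ ≤ ‖y‖) (hy : ‖y‖ = R)
    (hexp : -(L * (ε * exp (K * t) * h y)) ≤ exp (v y t) - exp (v x t)) :
    ¬IsMinOn (pairGap ε K h u · t) (orderedPairs _ R) (x, y) := by
  intro hspace
  set δ := ε * exp (K * t)
  have hδ : 0 < δ := by positivity
  have hflux : L * (δ * h y) < δ * fderiv ℝ h y (R⁻¹ • y) := by
    calc L * (δ * h y) = δ * (L * h y) := by ring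
      _ < δ * fderiv ℝ h y (R⁻¹ • y) := by gcongr; exact hh.flux y hy
  have hline : HasLineDerivAt ℝ (fun z => u z t + δ * h z)
      (exp (v y t) + δ * fderiv ℝ h y (R⁻¹ • y)) y (R⁻¹ • y) :=
    HasDerivAt.add (hsol.hasLineDerivAt_u hy ht)
      (HasDerivAt.const_mul δ
        ((hh.contDiff.differentiable two_ne_zero y).hasFDerivAt.hasLineDerivAt _))
  have hnonneg : 0 ≤ L * (δ * h y) := mul_nonneg hL (mul_pos hδ (hh.pos y)).le
  rcases hxy.eq_or_lt with heq | hlt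
  · have hle := normal_lineDeriv_le_of_isMinOn_orderedPairs hR hspace (heq.trans hy) hy hline
      (hsol.hasLineDerivAt_u (heq.trans hy) ht)
    linarith
  · have hle := normal_lineDeriv_nonpos_of_isMinOn_orderedPairs (g := (u · t)) hspace hlt hy hline
    linarith [exp_pos (v y t)]

theorem pairGap_ne_zero (hsol : IsClassicalSolution n R T lam1 lam2 u v u₀ v₀)
    (hR : 0 < R) (hlam1 : 0 ≤ lam1) (hh : IsFluxBarrier R L M h) (hε : 0 < ε)
    (hK : lam1 * L + M < K) (ht : t ∈ Ioo 0 T) (hp : (x, y) ∈ orderedPairs _ R)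
    (hL : exp (v x t) ≤ L)
    (hu : ∀ p ∈ orderedPairs _ R, ∀ s ∈ Icc 0 t, 0 ≤ pairGap ε K h u p s)
    (hv : 0 ≤ pairGap ε K h v (x, y) t) : pairGap ε K h u (x, y) t ≠ 0 := by
  intro hzero
  have hspace : IsMinOn (pairGap ε K h u · t) (orderedPairs _ R) (x, y) := fun p hp =>
    hzero.trans_le (hu p hp t ⟨ht.1.le, le_rfl⟩)
  have htime : IsMinOn (pairGap ε K h u (x, y)) (Icc 0 t) t := fun s hs =>
    hzero.trans_le (hu _ hp s hs)
  have hexp : -(L * (ε * exp (K * t) * h y)) ≤ exp (v y t) - exp (v x t) :=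
    neg_mul_le_exp_sub_exp hL (mul_pos (mul_pos hε (exp_pos _)) (hh.pos y)).le
      (by unfold pairGap at hv; linarith)
  rcases hp.2.lt_or_eq with hy | hy
  · exact hsol.not_isMinOn_pairGap_Icc hlam1 hh hε hK ht hp.1 hy hspace hexp htime
  · exact hsol.not_isMinOn_pairGap_of_norm_eq hR hh hε ((exp_pos _).le.trans hL) ht hp.1 hy hexp
      hspace

theorem pairGap_zero_pos (hsol : IsClassicalSolution n R T lam1 lam2 u v u₀ v₀)
    (hu₀ : RadiallyMonotone R u₀) (hh : ∀ x, 0 < h x) (hε : 0 < ε)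
    {p : EuclideanSpace ℝ (Fin n) × EuclideanSpace ℝ (Fin n)} (hp : p ∈ orderedPairs _ R) :
    0 < pairGap ε K h u p 0 := by
  have hball := orderedPairs_subset_closedBall_prod hp
  have hraise : 0 < ε * exp (K * 0) * h p.2 := mul_pos (mul_pos hε (exp_pos _)) (hh _)
  rw [pairGap, hsol.init_u _ hball.1, hsol.init_u _ hball.2]
  linarith [hu₀ hp.1 hp.2]

theorem min_pairGap_pos (hsol : IsClassicalSolution n R T lam1 lam2 u v u₀ v₀)
    (hR : 0 < R) (hlam1 : 0 ≤ lam1) (hlam2 : 0 ≤ lam2)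
    (hu₀ : RadiallyMonotone R u₀) (hv₀ : RadiallyMonotone R v₀)
    (hh : IsFluxBarrier R L M h) (hε : 0 < ε) (hK₁ : lam1 * L + M < K) (hK₂ : lam2 * L + M < K)
    {τ : ℝ} (hτ : τ < T) (hLu : ∀ x, ‖x‖ ≤ R → ∀ t ∈ Icc 0 τ, exp (u x t) ≤ L)
    (hLv : ∀ x, ‖x‖ ≤ R → ∀ t ∈ Icc 0 τ, exp (v x t) ≤ L) :
    ∀ p ∈ orderedPairs _ R, ∀ t ∈ Icc 0 τ,
      0 < min (pairGap ε K h u p t) (pairGap ε K h v p t) := by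
  by_contra! hneg
  have hIcc : Icc 0 τ ⊆ Ico 0 T := Icc_subset_Ico_right hτ
  have hcont := (continuousOn_pairGap hsol.cont_u hh.contDiff.continuous ε K).inf
    (continuousOn_pairGap hsol.cont_v hh.contDiff.continuous ε K)
  have hinit (p) (hp : p ∈ orderedPairs _ R) :
      0 < min (pairGap ε K h u p 0) (pairGap ε K h v p 0) :=
    lt_min (hsol.pairGap_zero_pos hu₀ hh.pos hε hp) (hsol.swap.pairGap_zero_pos hv₀ hh.pos hε hp)
  obtain ⟨t, ht, ⟨⟨x, y⟩, hp, hzero⟩, hnonneg⟩ := exists_first_contact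
    (f := fun p t => min (pairGap ε K h u p t) (pairGap ε K h v p t))
    isCompact_orderedPairs (hcont.mono (prod_mono_right hIcc)) hinit hneg
  have hu := fun p hp s hs => (le_min_iff.1 (hnonneg p hp s hs)).1
  have hv := fun p hp s hs => (le_min_iff.1 (hnonneg p hp s hs)).2
  have htT : t ∈ Ioo 0 T := ⟨ht.1, ht.2.trans_lt hτ⟩
  have htτ : t ∈ Icc 0 τ := Ioc_subset_Icc_self ht
  have htt : t ∈ Icc 0 t := right_mem_Icc.2 ht.1.le
  have hx : ‖x‖ ≤ R := hp.1.trans hp.2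
  rcases min_choice (pairGap ε K h u (x, y) t) (pairGap ε K h v (x, y) t) with hmin | hmin
  · exact hsol.pairGap_ne_zero hR hlam1 hh hε hK₁ htT hp (hLv x hx t htτ) hu (hv _ hp t htt)
      (hmin ▸ hzero)
  · exact hsol.swap.pairGap_ne_zero hR hlam2 hh hε hK₂ htT hp (hLu x hx t htτ) hv (hu _ hp t htt)
      (hmin ▸ hzero)

theorem radiallyMonotone_u (hsol : IsClassicalSolution n R T lam1 lam2 u v u₀ v₀)
    (hR : 0 < R) (hlam1 : 0 ≤ lam1) (hlam2 : 0 ≤ lam2)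
    (hu₀ : RadiallyMonotone R u₀) (hv₀ : RadiallyMonotone R v₀)
    (ht : t ∈ Ioo 0 T) : RadiallyMonotone R (u · t) := by
  intro x y hxy hy
  obtain ⟨Lu, hLu⟩ := hsol.exists_exp_u_le ht.2
  obtain ⟨Lv, hLv⟩ := hsol.swap.exists_exp_u_le ht.2
  set L := max Lu Lv
  obtain ⟨M, h, hh⟩ := exists_isFluxBarrier (E := EuclideanSpace ℝ (Fin n)) hR L
  obtain ⟨K, hK⟩ := exists_gt (max (lam1 * L + M) (lam2 * L + M))
  have hgap (ε : ℝ) (hε : 0 < ε) : 0 < pairGap ε K h u (x, y) t :=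
    (lt_min_iff.1 <| hsol.min_pairGap_pos hR hlam1 hlam2 hu₀ hv₀ hh hε (max_lt_iff.1 hK).1
      (max_lt_iff.1 hK).2 ht.2 (fun z hz s hs => (hLu z hz s hs).trans (le_max_left _ _))
      (fun z hz s hs => (hLv z hz s hs).trans (le_max_right _ _)) (x, y) ⟨hxy, hy⟩ t
      ⟨ht.1.le, le_rfl⟩).1
  have hlim : Tendsto (fun ε => pairGap ε K h u (x, y) t) (𝓝[>] 0) (𝓝 (u y t - u x t)) := by
    refine (Continuous.tendsto' ?_ 0 _ ?_).mono_left nhdsWithin_le_nhds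
    · unfold pairGap
      fun_prop
    · rw [pairGap, zero_mul, zero_mul, add_zero]
  rw [← sub_nonneg]
  exact ge_of_tendsto hlim (eventually_mem_nhdsWithin.mono fun ε hε => (hgap ε hε).le)

end IsClassicalSolution

end System

theorem radial_derivative_nonneg_general {n : ℕ} {R T lam1 lam2 : ℝ}
    (hR : 0 < R) (hlam1 : 0 ≤ lam1) (hlam2 : 0 ≤ lam2)
    {u v : EuclideanSpace ℝ (Fin n) → ℝ → ℝ} {u₀ v₀ : EuclideanSpace ℝ (Fin n) → ℝ}
    (hu₀ : RadiallyMonotone R u₀) (hv₀ : RadiallyMonotone R v₀)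
    (hsol : IsClassicalSolution n R T lam1 lam2 u v u₀ v₀) :
    ∀ e : EuclideanSpace ℝ (Fin n), ‖e‖ = 1 → ∀ r ∈ Icc (0 : ℝ) R, ∀ t ∈ Ioo (0 : ℝ) T,
      0 ≤ derivWithin (fun ρ : ℝ => u (ρ • e) t) (Icc 0 R) r ∧
      0 ≤ derivWithin (fun ρ : ℝ => v (ρ • e) t) (Icc 0 R) r := by
  intro e he r _ t ht
  have hu : RadiallyMonotone R (u · t) := hsol.radiallyMonotone_u hR hlam1 hlam2 hu₀ hv₀ ht
  have hv : RadiallyMonotone R (v · t) := hsol.swap.radiallyMonotone_u hR hlam2 hlam1 hv₀ hu₀ ht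
  exact ⟨hu.derivWithin_smul_nonneg he r, hv.derivWithin_smul_nonneg he r⟩

/-- Lemma 2.1(ii): for a classical solution `(u,v)` of problem (1.1), written in radial
coordinates, the radial derivatives satisfy `u_r(r,t) ≥ 0` and `v_r(r,t) ≥ 0` for all
`(r,t) ∈ [0,R] × (0,T)`.  The radial derivative at radius `r` in the unit direction `e`
is expressed as the (one-sided, within `[0,R]`) derivative of `ρ ↦ u(ρ • e, t)`. -/
theorem radial_derivative_nonneg {n : ℕ} (hn : 1 ≤ n) {R T lam1 lam2 : ℝ}
    (hR : 0 < R) (hT : 0 < T) (hlam1 : 0 < lam1) (hlam2 : 0 < lam2)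
    {u v : EuclideanSpace ℝ (Fin n) → ℝ → ℝ} {u₀ v₀ : EuclideanSpace ℝ (Fin n) → ℝ}
    (hdata : AdmissibleData n R u₀ v₀)
    (hsol : IsClassicalSolution n R T lam1 lam2 u v u₀ v₀) :
    ∀ e : EuclideanSpace ℝ (Fin n), ‖e‖ = 1 → ∀ r ∈ Icc (0 : ℝ) R, ∀ t ∈ Ioo (0 : ℝ) T,
      0 ≤ derivWithin (fun ρ : ℝ => u (ρ • e) t) (Icc 0 R) r ∧
      0 ≤ derivWithin (fun ρ : ℝ => v (ρ • e) t) (Icc 0 R) r :=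
  radial_derivative_nonneg_general hR hlam1.le hlam2.le hdata.radiallyMonotone_u₀
    hdata.radiallyMonotone_v₀ hsol
end

section
/- Theorem 4.1 (interior bound): Let (u,v) be a classical solution of problem (1.1) that blows up at time T < ∞. There exists λ₀ > 0, depending only on n, R, T, ‖u₀‖_∞, ‖v₀‖_∞ and the constant C from the upper blow-up rate estimate e^{u(R,t)}, e^{v(R,t)} ≤ C/(T−t), such that if max{λ₁, λ₂} ≤ λ₀, then there exists a constant A > 0 with u(x,t) ≤ log(1/(A(R²−|x|²)²)) and v(x,t) ≤ log(1/(A(R²−|x|²)²)) for all (x,t) ∈ B_R × (0,T). -/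
/-!
With `g = A (R² - |x|²)² + B (T - t)`, the function `w = -log g` satisfies `e^w = 1 / g`,
`w_t = B / g` and `Δw ≤ (4 n + 8) A R² / g`, because the gradient term `A² |∇(R² - |x|²)²|² / g²` is
at most `16 A |x|² / g`. Hence `w` is a strict supersolution of `w_t = Δw + λ e^w` as soon as
`λ + (4 n + 8) A R² < B`. The rate estimate puts `u` and `v` below `w` on the lateral boundary if
`B C < 1`, and the bound on the initial data does so at time `0` if `A R⁴ + B T < e^{-K}`; these
conditions are met by choosing `B`, then `A`, then `λ₀` small. Since the coupling is increasing, the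
first point where `u` or `v` touches `w` would violate the first and second derivative tests, so
`u, v < w` throughout, and dropping `B (T - t)` from `g` gives the bound.
-/

open Set Real Metric MeasureTheory Filter Topology

section DerivativeTests

lemma iteratedDeriv_two_nonpos_of_isLocalMax {f : ℝ → ℝ} {a : ℝ} (hf : ContinuousAt f a)
    (hmax : IsLocalMax f a) : iteratedDeriv 2 f a ≤ 0 := by
  by_contra! hpos
  have hpos' : 0 < deriv (deriv f) a := by rwa [iteratedDeriv_succ, iteratedDeriv_one] at hpos
  have hmin : IsLocalMin f a := isLocalMin_of_deriv_deriv_pos hpos' hmax.deriv_eq_zero hf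
  have hconst : f =ᶠ[𝓝 a] fun _ => f a := by
    filter_upwards [hmax, hmin] with s hle hge using le_antisymm hle hge
  have hzero : deriv (deriv f) a = 0 := by simp [hconst.deriv.deriv_eq]
  exact hpos'.ne' hzero

lemma deriv_nonneg_of_isLocalMaxOn_Iic {f : ℝ → ℝ} {a : ℝ} (hmax : IsLocalMaxOn f (Iic a) a) :
    0 ≤ deriv f a := by
  by_cases hf : DifferentiableAt ℝ f a
  · have hcone : (-1 : ℝ) ∈ posTangentConeAt (Iic a) a :=
      mem_posTangentConeAt_of_segment_subset <|
        (convex_Iic a).segment_subset self_mem_Iic (mem_Iic.2 (by linarith))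
    simpa using hmax.hasFDerivWithinAt_nonpos hf.hasFDerivAt.hasFDerivWithinAt hcone
  · exact (deriv_zero_of_not_differentiableAt hf).ge

end DerivativeTests

section Laplacian

variable {n : ℕ} {f g : EuclideanSpace ℝ (Fin n) → ℝ} {x : EuclideanSpace ℝ (Fin n)}

lemma contDiffAt_comp_coordLine {k : WithTop ℕ∞} (hf : ContDiffAt ℝ k f x) (i : Fin n) :
    ContDiffAt ℝ k (fun s : ℝ => f (x + s • EuclideanSpace.single i (1 : ℝ))) 0 :=
  ContDiffAt.comp (0 : ℝ) (by simpa using hf) (by fun_prop)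

lemma lap_sub (hf : ContDiffAt ℝ 2 f x) (hg : ContDiffAt ℝ 2 g x) :
    lap (fun y => f y - g y) x = lap f x - lap g x := by
  simp only [lap, ← Finset.sum_sub_distrib]
  exact Finset.sum_congr rfl fun i _ =>
    iteratedDeriv_sub (contDiffAt_comp_coordLine hf i) (contDiffAt_comp_coordLine hg i)

lemma lap_nonpos_of_isLocalMax (hf : ContinuousAt f x) (hmax : IsLocalMax f x) : lap f x ≤ 0 := by
  refine Finset.sum_nonpos fun i _ => ?_
  have hline : Tendsto (fun s : ℝ => x + s • EuclideanSpace.single i (1 : ℝ)) (𝓝 0) (𝓝 x) :=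
    Continuous.tendsto' (by fun_prop) _ _ (by simp)
  refine iteratedDeriv_two_nonpos_of_isLocalMax ?_ ?_
  · simpa [ContinuousAt, Function.comp_def] using hf.tendsto.comp hline
  · simpa [IsLocalMax, IsMaxFilter] using hline.eventually hmax

lemma norm_sq_add_smul_single (x : EuclideanSpace ℝ (Fin n)) (i : Fin n) (s : ℝ) :
    ‖x + s • EuclideanSpace.single i (1 : ℝ)‖ ^ 2 = ‖x‖ ^ 2 + 2 * x i * s + s ^ 2 := by
  rw [norm_add_sq_real, inner_smul_right, EuclideanSpace.inner_single_right, norm_smul]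
  simp only [ringHom_apply, one_mul, norm_eq_abs, PiLp.norm_single, norm_one, mul_one, sq_abs]
  ring

lemma iteratedDeriv_two_comp_quadratic {φ : ℝ → ℝ} {r : ℝ} (hφ : ContDiffAt ℝ 2 φ r) (b : ℝ) :
    iteratedDeriv 2 (fun s : ℝ => φ (r + b * s + s ^ 2)) 0
      = b ^ 2 * iteratedDeriv 2 φ r + 2 * deriv φ r := by
  have hderiv : deriv (fun s : ℝ => r + b * s + s ^ 2) = fun s => b + 2 * s := by
    funext s
    simpa using
      ((((hasDerivAt_id' s).const_mul b).const_add r).fun_add ((hasDerivAt_id' s).fun_pow 2)).deriv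
  have hderiv₂ : iteratedDeriv 2 (fun s : ℝ => r + b * s + s ^ 2) 0 = 2 := by
    rw [iteratedDeriv_succ, iteratedDeriv_one, hderiv]
    simp
  have hchain := iteratedDeriv_comp_two (f := fun s : ℝ => r + b * s + s ^ 2) (x := 0)
    (by simpa using hφ) (by fun_prop)
  rw [hderiv₂, hderiv] at hchain
  simpa [Function.comp_def, mul_comm] using hchain

lemma lap_comp_norm_sq {φ : ℝ → ℝ} (hφ : ContDiffAt ℝ 2 φ (‖x‖ ^ 2)) :
    lap (fun y => φ (‖y‖ ^ 2)) x
      = 4 * ‖x‖ ^ 2 * iteratedDeriv 2 φ (‖x‖ ^ 2) + 2 * n * deriv φ (‖x‖ ^ 2) := by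
  simp only [lap, norm_sq_add_smul_single, iteratedDeriv_two_comp_quadratic hφ, mul_pow,
    Finset.sum_add_distrib, ← Finset.sum_mul, ← Finset.mul_sum,
    ← EuclideanSpace.real_norm_sq_eq, Finset.sum_const, Finset.card_univ, Fintype.card_fin,
    nsmul_eq_mul]
  ring

end Laplacian

section MaximumPrinciple

lemma exists_first_zero_of_nonneg {X ι : Type*} [TopologicalSpace X] [T2Space X] [Finite ι]
    {K : Set X} (hK : IsCompact K) {T : ℝ} {z : ι → X → ℝ → ℝ}
    (hcont : ∀ i, ContinuousOn (fun p : X × ℝ => z i p.1 p.2) (K ×ˢ Ico 0 T))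
    (hinit : ∀ i, ∀ x ∈ K, z i x 0 < 0)
    {i : ι} {x : X} (hx : x ∈ K) {t : ℝ} (ht : t ∈ Ico 0 T) (hz : 0 ≤ z i x t) :
    ∃ j, ∃ y ∈ K, ∃ s ∈ Ioo 0 T, z j y s = 0 ∧ ∀ k, ∀ y' ∈ K, ∀ s' ∈ Icc 0 s, z k y' s' ≤ 0 := by
  set Q : Set (X × ℝ) := K ×ˢ Icc 0 t
  have hQ : IsCompact Q := hK.prod isCompact_Icc
  have hQT : Q ⊆ K ×ˢ Ico 0 T := prod_mono_right fun s hs => ⟨hs.1, hs.2.trans_lt ht.2⟩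
  set S : Set (X × ℝ) := ⋃ k, {p ∈ Q | 0 ≤ z k p.1 p.2}
  have hS : IsCompact S := isCompact_iUnion fun k => hQ.of_isClosed_subset
    (hQ.isClosed.isClosed_le continuousOn_const ((hcont k).mono hQT)) (sep_subset _ _)
  have hSne : S.Nonempty := ⟨(x, t), mem_iUnion.2 ⟨i, ⟨hx, ht.1, le_rfl⟩, hz⟩⟩
  obtain ⟨⟨y, s⟩, hys, hmin⟩ := hS.exists_isMinOn hSne continuousOn_snd
  obtain ⟨j, ⟨hyQ, hzj⟩⟩ := mem_iUnion.1 hys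
  obtain ⟨hy, hsT⟩ := hQT hyQ
  have hs : s ∈ Ioo 0 T := by
    refine ⟨hsT.1.lt_of_ne ?_, hsT.2⟩
    rintro rfl
    exact hzj.not_gt (hinit j y hy)
  have hbefore : ∀ k, ∀ y' ∈ K, ∀ s' ∈ Ico 0 s, z k y' s' < 0 := by
    intro k y' hy' s' hs'
    by_contra! hz'
    have hmem : (y', s') ∈ S :=
      mem_iUnion.2 ⟨k, ⟨hy', hs'.1, hs'.2.le.trans hyQ.2.2⟩, hz'⟩
    exact hs'.2.not_ge (hmin hmem)
  have hupto : ∀ k, ∀ y' ∈ K, ∀ s' ∈ Icc 0 s, z k y' s' ≤ 0 := by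
    intro k y' hy' s' hs'
    have hcont' : ContinuousOn (z k y') (Icc 0 s) :=
      (hcont k).comp (f := fun τ => (y', τ)) (by fun_prop)
        fun τ hτ => ⟨hy', hτ.1, hτ.2.trans_lt hs.2⟩
    rw [← closure_Ico hs.1.ne] at hcont' hs'
    exact (hcont' s' hs').mono subset_closure |>.closure_le hs' continuousWithinAt_const
      fun τ hτ => (hbefore k y' hy' τ hτ).le
  exact ⟨j, y, hy, s, hs, (hupto j y hy s ⟨hs.1.le, le_rfl⟩).antisymm hzj, hupto⟩

theorem neg_of_deriv_lt_lap {n : ℕ} {ι : Type*} [Finite ι] {Ω : Set (EuclideanSpace ℝ (Fin n))}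
    (hΩ : IsOpen Ω) (hΩb : Bornology.IsBounded Ω) {T : ℝ}
    {z : ι → EuclideanSpace ℝ (Fin n) → ℝ → ℝ}
    (hcont : ∀ i, ContinuousOn (fun p : EuclideanSpace ℝ (Fin n) × ℝ => z i p.1 p.2)
      (closure Ω ×ˢ Ico 0 T))
    (hinit : ∀ i, ∀ x ∈ closure Ω, z i x 0 < 0)
    (hlat : ∀ i, ∀ x ∈ frontier Ω, ∀ t ∈ Ioo 0 T, z i x t < 0)
    (hpde : ∀ i, ∀ x ∈ Ω, ∀ t ∈ Ioo 0 T, (∀ j, z j x t ≤ 0) → z i x t = 0 →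
      deriv (z i x) t < lap (fun y => z i y t) x)
    (i : ι) {x : EuclideanSpace ℝ (Fin n)} (hx : x ∈ closure Ω) {t : ℝ} (ht : t ∈ Ico 0 T) :
    z i x t < 0 := by
  by_contra! hz
  obtain ⟨j, y, hy, s, hs, hzero, hle⟩ :=
    exists_first_zero_of_nonneg hΩb.isCompact_closure hcont hinit hx ht hz
  have hyΩ : y ∈ Ω := by
    by_contra hnot
    exact (hlat j y ⟨hy, by rwa [hΩ.interior_eq]⟩ s hs).ne hzero
  have hle_s : ∀ k, ∀ y' ∈ closure Ω, z k y' s ≤ 0 := fun k y' hy' =>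
    hle k y' hy' s ⟨hs.1.le, le_rfl⟩
  have htime : 0 ≤ deriv (z j y) s := by
    refine deriv_nonneg_of_isLocalMaxOn_Iic ?_
    filter_upwards [Icc_mem_nhdsLE hs.1] with s' hs'
    exact (hle j y hy s' hs').trans hzero.ge
  have hspace : lap (fun y' => z j y' s) y ≤ 0 := by
    have hnhds : closure Ω ∈ 𝓝 y := mem_of_superset (hΩ.mem_nhds hyΩ) subset_closure
    refine lap_nonpos_of_isLocalMax ?_ ?_
    · exact ((hcont j).comp (f := fun y' => (y', s)) (by fun_prop)
        fun y' hy' => ⟨hy', hs.1.le, hs.2⟩).continuousAt hnhds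
    · filter_upwards [hnhds] with y' hy' using (hle_s j y' hy').trans hzero.ge
  exact (hpde j y hyΩ s hs (fun k => hle_s k y hy) hzero).not_ge (hspace.trans htime)

end MaximumPrinciple

/-- Classical subsolutions on `Ω × (0,T)` of the system `∂ₜ uᵢ = Δ uᵢ + lam e^{u_{σ i}}`, which
couples each component to the exponential of the one chosen by `σ`. The equations of problem (1.1)
are the case of two components exchanged by `σ`, without boundary or initial conditions. -/
structure IsExpSubsolution {n : ℕ} {ι : Type*} (Ω : Set (EuclideanSpace ℝ (Fin n))) (T lam : ℝ)
    (σ : ι → ι) (u : ι → EuclideanSpace ℝ (Fin n) → ℝ → ℝ) : Prop where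
  continuousOn : ∀ i, ContinuousOn (fun p : EuclideanSpace ℝ (Fin n) × ℝ => u i p.1 p.2)
    (closure Ω ×ˢ Ico 0 T)
  contDiffAt : ∀ i, ∀ x ∈ Ω, ∀ t ∈ Ioo 0 T, ContDiffAt ℝ 2 (fun y => u i y t) x
  differentiableAt : ∀ i, ∀ x ∈ Ω, ∀ t ∈ Ioo 0 T, DifferentiableAt ℝ (u i x) t
  deriv_le : ∀ i, ∀ x ∈ Ω, ∀ t ∈ Ioo 0 T,
    deriv (u i x) t ≤ lap (fun y => u i y t) x + lam * exp (u (σ i) x t)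

theorem IsExpSubsolution.lt_of_strict_supersolution {n : ℕ} {ι : Type*} [Finite ι]
    {Ω : Set (EuclideanSpace ℝ (Fin n))} {T lam : ℝ} {σ : ι → ι}
    {u : ι → EuclideanSpace ℝ (Fin n) → ℝ → ℝ} {w : EuclideanSpace ℝ (Fin n) → ℝ → ℝ}
    (hu : IsExpSubsolution Ω T lam σ u) (hΩ : IsOpen Ω) (hΩb : Bornology.IsBounded Ω)
    (hlam : 0 ≤ lam)
    (hw_cont : ContinuousOn (fun p : EuclideanSpace ℝ (Fin n) × ℝ => w p.1 p.2)
      (closure Ω ×ˢ Ico 0 T))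
    (hw_space : ∀ x ∈ Ω, ∀ t ∈ Ioo 0 T, ContDiffAt ℝ 2 (fun y => w y t) x)
    (hw_time : ∀ x ∈ Ω, ∀ t ∈ Ioo 0 T, DifferentiableAt ℝ (w x) t)
    (hw_lt : ∀ x ∈ Ω, ∀ t ∈ Ioo 0 T,
      lap (fun y => w y t) x + lam * exp (w x t) < deriv (w x) t)
    (hinit : ∀ i, ∀ x ∈ closure Ω, u i x 0 < w x 0)
    (hlat : ∀ i, ∀ x ∈ frontier Ω, ∀ t ∈ Ioo 0 T, u i x t < w x t)
    (i : ι) {x : EuclideanSpace ℝ (Fin n)} (hx : x ∈ closure Ω) {t : ℝ} (ht : t ∈ Ico 0 T) :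
    u i x t < w x t := by
  refine sub_neg.1 <| neg_of_deriv_lt_lap (z := fun j y s => u j y s - w y s) hΩ hΩb
    (fun j => (hu.continuousOn j).sub hw_cont) (fun j y hy => sub_neg.2 (hinit j y hy))
    (fun j y hy s hs => sub_neg.2 (hlat j y hy s hs)) ?_ i hx ht
  intro j y hy s hs hle _
  have hcoupling : lam * exp (u (σ j) y s) ≤ lam * exp (w y s) :=
    mul_le_mul_of_nonneg_left (exp_le_exp.2 (sub_nonpos.1 (hle (σ j)))) hlam
  rw [lap_sub (hu.contDiffAt j y hy s hs) (hw_space y hy s hs),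
    deriv_fun_sub (hu.differentiableAt j y hy s hs) (hw_time y hy s hs)]
  linarith [hu.deriv_le j y hy s hs, hw_lt y hy s hs]

section Barrier

/-- The denominator `g` of `e^w`, for the barrier `w` below, as a function of `r = |x|²` and `t`. -/
def barrierDenom (R T A B r t : ℝ) : ℝ :=
  A * (R ^ 2 - r) ^ 2 + B * (T - t)

/-- The barrier `w = -log (A (R² - |x|²)² + B (T - t))` with which all components of a solution are
compared. -/
noncomputable def barrier {n : ℕ} (R T A B : ℝ) (x : EuclideanSpace ℝ (Fin n)) (t : ℝ) : ℝ :=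
  -log (barrierDenom R T A B (‖x‖ ^ 2) t)

variable {n : ℕ} {R T A B lam r t : ℝ} {x : EuclideanSpace ℝ (Fin n)}

lemma barrierDenom_pos (hA : 0 ≤ A) (hB : 0 < B) (ht : t < T) : 0 < barrierDenom R T A B r t :=
  add_pos_of_nonneg_of_pos (by positivity) (mul_pos hB (sub_pos.2 ht))

lemma lt_barrier_iff (hA : 0 ≤ A) (hB : 0 < B) (ht : t < T) {a : ℝ} :
    a < barrier R T A B x t ↔ barrierDenom R T A B (‖x‖ ^ 2) t < exp (-a) := by
  rw [barrier, lt_neg, log_lt_iff_lt_exp (barrierDenom_pos hA hB ht)]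

lemma exp_barrier (hA : 0 ≤ A) (hB : 0 < B) (ht : t < T) :
    exp (barrier R T A B x t) = (barrierDenom R T A B (‖x‖ ^ 2) t)⁻¹ := by
  rw [barrier, exp_neg, exp_log (barrierDenom_pos hA hB ht)]

lemma continuousOn_barrier (hA : 0 ≤ A) (hB : 0 < B) :
    ContinuousOn (fun p : EuclideanSpace ℝ (Fin n) × ℝ => barrier R T A B p.1 p.2)
      (univ ×ˢ Iio T) := by
  refine (ContinuousOn.log ?_ fun p hp => (barrierDenom_pos hA hB hp.2).ne').neg
  unfold barrierDenom
  fun_prop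

lemma contDiff_neg_log_barrierDenom (hA : 0 ≤ A) (hB : 0 < B) (ht : t < T) {k : WithTop ℕ∞} :
    ContDiff ℝ k fun r => -log (barrierDenom R T A B r t) := by
  refine (ContDiff.log ?_ fun r => (barrierDenom_pos hA hB ht).ne').neg
  unfold barrierDenom
  fun_prop

lemma contDiff_barrier (hA : 0 ≤ A) (hB : 0 < B) (ht : t < T) {k : WithTop ℕ∞} :
    ContDiff ℝ k fun x : EuclideanSpace ℝ (Fin n) => barrier R T A B x t :=
  (contDiff_neg_log_barrierDenom hA hB ht).comp (contDiff_norm_sq ℝ)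

lemma hasDerivAt_barrier (hA : 0 ≤ A) (hB : 0 < B) (ht : t < T) :
    HasDerivAt (barrier R T A B x) (B / barrierDenom R T A B (‖x‖ ^ 2) t) t := by
  have hdenom : HasDerivAt (barrierDenom R T A B (‖x‖ ^ 2)) (-B) t := by
    refine ((((hasDerivAt_id' t).const_sub T).const_mul B).const_add
      (A * (R ^ 2 - ‖x‖ ^ 2) ^ 2)).congr_deriv ?_
    ring
  refine (hdenom.log (barrierDenom_pos hA hB ht).ne').fun_neg.congr_deriv ?_
  ring

lemma hasDerivAt_barrierDenom :
    HasDerivAt (fun r => barrierDenom R T A B r t) (-(2 * A * (R ^ 2 - r))) r := by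
  refine (((((hasDerivAt_id' r).const_sub (R ^ 2)).fun_pow 2).const_mul A).add_const
    (B * (T - t))).congr_deriv ?_
  ring

lemma deriv_neg_log_barrierDenom (hA : 0 ≤ A) (hB : 0 < B) (ht : t < T) :
    deriv (fun r => -log (barrierDenom R T A B r t)) r
      = 2 * A * (R ^ 2 - r) / barrierDenom R T A B r t := by
  rw [(hasDerivAt_barrierDenom.log (barrierDenom_pos hA hB ht).ne').fun_neg.deriv]
  ring

lemma iteratedDeriv_two_neg_log_barrierDenom (hA : 0 ≤ A) (hB : 0 < B) (ht : t < T) :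
    iteratedDeriv 2 (fun r => -log (barrierDenom R T A B r t)) r
      = -(2 * A) / barrierDenom R T A B r t
        + (2 * A * (R ^ 2 - r)) ^ 2 / barrierDenom R T A B r t ^ 2 := by
  have hg : barrierDenom R T A B r t ≠ 0 := (barrierDenom_pos hA hB ht).ne'
  have hderiv : deriv (fun r => -log (barrierDenom R T A B r t))
      = fun ρ => 2 * A * (R ^ 2 - ρ) / barrierDenom R T A B ρ t :=
    funext fun _ => deriv_neg_log_barrierDenom hA hB ht
  rw [iteratedDeriv_succ, iteratedDeriv_one, hderiv]
  refine ((((hasDerivAt_id' r).const_sub (R ^ 2)).const_mul (2 * A)).fun_div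
    hasDerivAt_barrierDenom hg).deriv.trans ?_
  field_simp
  ring

lemma lap_barrier_le (hA : 0 ≤ A) (hB : 0 < B) (hx : ‖x‖ ≤ R) (ht : t < T) :
    lap (fun y => barrier R T A B y t) x
      ≤ (4 * n + 8) * A * R ^ 2 / barrierDenom R T A B (‖x‖ ^ 2) t := by
  have hg := barrierDenom_pos (R := R) (r := ‖x‖ ^ 2) hA hB ht
  have hψ : A * (R ^ 2 - ‖x‖ ^ 2) ^ 2 ≤ barrierDenom R T A B (‖x‖ ^ 2) t :=
    le_add_of_nonneg_right (mul_pos hB (sub_pos.2 ht)).le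
  have hr : ‖x‖ ^ 2 ≤ R ^ 2 := by gcongr
  simp only [barrier]
  rw [lap_comp_norm_sq (contDiff_neg_log_barrierDenom hA hB ht).contDiffAt,
    iteratedDeriv_two_neg_log_barrierDenom hA hB ht, deriv_neg_log_barrierDenom hA hB ht]
  generalize barrierDenom R T A B (‖x‖ ^ 2) t = g at *
  have hgrad : (2 * A * (R ^ 2 - ‖x‖ ^ 2)) ^ 2 / g ^ 2 ≤ 4 * A / g := by
    rw [div_le_div_iff₀ (by positivity) hg]
    calc (2 * A * (R ^ 2 - ‖x‖ ^ 2)) ^ 2 * g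
        = 4 * A * g * (A * (R ^ 2 - ‖x‖ ^ 2) ^ 2) := by ring
      _ ≤ 4 * A * g * g := by gcongr
      _ = 4 * A * g ^ 2 := by ring
  calc 4 * ‖x‖ ^ 2 * (-(2 * A) / g + (2 * A * (R ^ 2 - ‖x‖ ^ 2)) ^ 2 / g ^ 2)
        + 2 * n * (2 * A * (R ^ 2 - ‖x‖ ^ 2) / g)
      ≤ 4 * ‖x‖ ^ 2 * (-(2 * A) / g + 4 * A / g) + 2 * n * (2 * A * (R ^ 2 - ‖x‖ ^ 2) / g) := by
        gcongr
    _ = (8 * A * ‖x‖ ^ 2 + 4 * n * A * (R ^ 2 - ‖x‖ ^ 2)) / g := by ring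
    _ ≤ (8 * A * R ^ 2 + 4 * n * A * (R ^ 2 - 0)) / g := by gcongr; positivity
    _ = (4 * n + 8) * A * R ^ 2 / g := by ring

lemma barrier_strict_supersolution (hA : 0 ≤ A) (hB : 0 < B)
    (hAB : lam + (4 * n + 8) * A * R ^ 2 < B) (hx : ‖x‖ ≤ R) (ht : t < T) :
    lap (fun y => barrier R T A B y t) x + lam * exp (barrier R T A B x t)
      < deriv (barrier R T A B x) t := by
  rw [(hasDerivAt_barrier hA hB ht).deriv, exp_barrier hA hB ht, ← div_eq_mul_inv]
  refine (add_le_add_left (lap_barrier_le hA hB hx ht) _).trans_lt ?_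
  rw [← add_div, add_comm]
  exact div_lt_div_of_pos_right hAB (barrierDenom_pos hA hB ht)

lemma lt_barrier_of_norm_eq (hA : 0 ≤ A) (hB : 0 < B) {C : ℝ} (hBC : B * C < 1) (hx : ‖x‖ = R)
    (ht : t < T) {a : ℝ} (ha : exp a ≤ C / (T - t)) : a < barrier R T A B x t := by
  have hTt : 0 < T - t := sub_pos.2 ht
  rw [lt_barrier_iff hA hB ht, exp_neg, lt_inv_comm₀ (barrierDenom_pos hA hB ht) (exp_pos a)]
  have hdenom : barrierDenom R T A B (‖x‖ ^ 2) t = B * (T - t) := by simp [barrierDenom, hx]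
  rw [hdenom]
  refine ha.trans_lt ?_
  rw [inv_eq_one_div, div_lt_div_iff₀ hTt (mul_pos hB hTt)]
  linarith [mul_lt_mul_of_pos_right hBC hTt]

lemma lt_barrier_zero (hA : 0 ≤ A) (hB : 0 < B) (hT : 0 < T) {K : ℝ}
    (hK : A * R ^ 4 + B * T < exp (-K)) (hx : ‖x‖ ≤ R) : K < barrier R T A B x 0 := by
  rw [lt_barrier_iff hA hB hT]
  have hr : ‖x‖ ^ 2 ≤ R ^ 2 := by gcongr
  calc barrierDenom R T A B (‖x‖ ^ 2) 0 = A * (R ^ 2 - ‖x‖ ^ 2) ^ 2 + B * T := by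
        simp [barrierDenom]
    _ ≤ A * (R ^ 2) ^ 2 + B * T := by
        have hsq : (R ^ 2 - ‖x‖ ^ 2) ^ 2 ≤ (R ^ 2) ^ 2 :=
          pow_le_pow_left₀ (sub_nonneg.2 hr) (sub_le_self _ (sq_nonneg _)) 2
        gcongr
    _ < exp (-K) := by rwa [← pow_mul]

lemma barrier_le_log (hA : 0 < A) (hB : 0 ≤ B) (hx : ‖x‖ < R) (ht : t ≤ T) :
    barrier R T A B x t ≤ log (1 / (A * (R ^ 2 - ‖x‖ ^ 2) ^ 2)) := by
  have hr : 0 < R ^ 2 - ‖x‖ ^ 2 := sub_pos.2 (by gcongr)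
  rw [one_div, log_inv, barrier]
  exact neg_le_neg <| log_le_log (by positivity) <|
    le_add_of_nonneg_right (mul_nonneg hB (sub_nonneg.2 ht))

end Barrier

lemma IsExpSubsolution.lt_barrier {n : ℕ} {ι : Type*} [Finite ι] {R T A B C K lam : ℝ} {σ : ι → ι}
    {u : ι → EuclideanSpace ℝ (Fin n) → ℝ → ℝ} (hu : IsExpSubsolution (ball 0 R) T lam σ u)
    (hR : 0 < R) (hA : 0 ≤ A) (hB : 0 < B) (hlam : 0 ≤ lam) (hBC : B * C < 1)
    (hK : A * R ^ 4 + B * T < exp (-K)) (hAB : lam + (4 * n + 8) * A * R ^ 2 < B)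
    (hinit : ∀ i, ∀ x ∈ closedBall (0 : EuclideanSpace ℝ (Fin n)) R, u i x 0 ≤ K)
    (hrate : ∀ i, ∀ t ∈ Ioo (0 : ℝ) T, ∀ x : EuclideanSpace ℝ (Fin n), ‖x‖ = R →
      exp (u i x t) ≤ C / (T - t))
    (i : ι) {x : EuclideanSpace ℝ (Fin n)} (hx : x ∈ closedBall 0 R) {t : ℝ} (ht : t ∈ Ico 0 T) :
    u i x t < barrier R T A B x t := by
  have hT : 0 < T := ht.1.trans_lt ht.2
  have hclosure := closure_ball (0 : EuclideanSpace ℝ (Fin n)) hR.ne'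
  refine hu.lt_of_strict_supersolution isOpen_ball isBounded_ball hlam
    ((continuousOn_barrier hA hB).mono (prod_mono (subset_univ _) fun s hs => hs.2))
    (fun y _ s hs => (contDiff_barrier hA hB hs.2).contDiffAt)
    (fun y _ s hs => (hasDerivAt_barrier hA hB hs.2).differentiableAt)
    (fun y hy s hs => barrier_strict_supersolution hA hB hAB (mem_ball_zero_iff.1 hy).le hs.2)
    (fun j y hy => ?_) (fun j y hy s hs => ?_) i (hclosure ▸ hx) ht
  · rw [hclosure] at hy
    exact (hinit j y hy).trans_lt (lt_barrier_zero hA hB hT hK (mem_closedBall_zero_iff.1 hy))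
  · rw [frontier_ball _ hR.ne', mem_sphere_zero_iff_norm] at hy
    exact lt_barrier_of_norm_eq hA hB hBC hy hs.2 (hrate j s hs y hy)

lemma eventually_nhdsGT_zero_mul_lt (b : ℝ) {a : ℝ} (ha : 0 < a) : ∀ᶠ x in 𝓝[>] 0, b * x < a :=
  nhdsWithin_le_nhds <| (Continuous.tendsto' (by fun_prop) _ _ (mul_zero b)).eventually_lt_const ha

lemma exists_barrier_parameters (n : ℕ) (R T C K : ℝ) :
    ∃ lam > 0, ∃ A > 0, ∃ B > 0, B * C < 1 ∧ A * R ^ 4 + B * T < exp (-K) ∧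
      lam + (4 * n + 8) * A * R ^ 2 < B := by
  obtain ⟨B, ⟨hBC, hBT⟩, hB⟩ := ((eventually_nhdsGT_zero_mul_lt C one_pos).and
    (eventually_nhdsGT_zero_mul_lt T (exp_pos (-K)))).and self_mem_nhdsWithin |>.exists
  obtain ⟨A, ⟨hAK, hAB⟩, hA⟩ := ((eventually_nhdsGT_zero_mul_lt (R ^ 4) (sub_pos.2 hBT)).and
    (eventually_nhdsGT_zero_mul_lt ((4 * n + 8) * R ^ 2) hB)).and self_mem_nhdsWithin |>.exists
  obtain ⟨lam, hlam, hlamB⟩ := exists_between (sub_pos.2 hAB)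
  exact ⟨lam, hlam, A, hA, B, hB, by linarith, by linarith, by linarith⟩

theorem interior_bound_general {n : ℕ} {ι : Type*} [Finite ι] {R : ℝ} (T C K : ℝ) (hR : 0 < R) :
    ∃ lam0 > 0, ∃ A > 0, ∀ (σ : ι → ι) (u : ι → EuclideanSpace ℝ (Fin n) → ℝ → ℝ),
      IsExpSubsolution (ball 0 R) T lam0 σ u →
      (∀ i, ∀ x ∈ closedBall (0 : EuclideanSpace ℝ (Fin n)) R, u i x 0 ≤ K) →
      (∀ i, ∀ t ∈ Ioo (0 : ℝ) T, ∀ x : EuclideanSpace ℝ (Fin n), ‖x‖ = R →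
        exp (u i x t) ≤ C / (T - t)) →
      ∀ i, ∀ x ∈ ball (0 : EuclideanSpace ℝ (Fin n)) R, ∀ t ∈ Ioo (0 : ℝ) T,
        u i x t ≤ log (1 / (A * (R ^ 2 - ‖x‖ ^ 2) ^ 2)) := by
  obtain ⟨lam0, hlam0, A, hA, B, hB, hBC, hK, hAB⟩ := exists_barrier_parameters n R T C K
  refine ⟨lam0, hlam0, A, hA, fun σ u hu hinit hrate i x hx t ht => ?_⟩
  have hlt := hu.lt_barrier hR hA.le hB hlam0.le hBC hK hAB hinit hrate i
    (ball_subset_closedBall hx) (Ioo_subset_Ico_self ht)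
  exact hlt.le.trans (barrier_le_log hA hB.le (mem_ball_zero_iff.1 hx) ht.2.le)

lemma IsClassicalSolution.isExpSubsolution {n : ℕ} {R T lam lam1 lam2 : ℝ}
    {u v : EuclideanSpace ℝ (Fin n) → ℝ → ℝ} {u₀ v₀ : EuclideanSpace ℝ (Fin n) → ℝ}
    (hsol : IsClassicalSolution n R T lam1 lam2 u v u₀ v₀) (hR : 0 < R)
    (hlam : max lam1 lam2 ≤ lam) :
    IsExpSubsolution (ball 0 R) T lam not (fun b => bif b then u else v) := by
  have hclosure := closure_ball (0 : EuclideanSpace ℝ (Fin n)) hR.ne'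
  obtain ⟨hlam1, hlam2⟩ := max_le_iff.1 hlam
  refine ⟨Bool.forall_bool.2 ?_, Bool.forall_bool.2 ?_, Bool.forall_bool.2 ?_,
    Bool.forall_bool.2 ?_⟩
  · rw [hclosure]
    exact ⟨hsol.cont_v, hsol.cont_u⟩
  · exact ⟨fun x hx t ht => (hsol.reg_space_v t ht).contDiffAt (closedBall_mem_nhds_of_mem hx),
      fun x hx t ht => (hsol.reg_space_u t ht).contDiffAt (closedBall_mem_nhds_of_mem hx)⟩
  · exact ⟨fun x hx t ht => hsol.reg_time_v x (ball_subset_closedBall hx) t ht,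
      fun x hx t ht => hsol.reg_time_u x (ball_subset_closedBall hx) t ht⟩
  · refine ⟨fun x hx t ht => (hsol.pde_v x hx t ht).trans_le ?_,
      fun x hx t ht => (hsol.pde_u x hx t ht).trans_le ?_⟩
    all_goals
      simp only [cond_true, cond_false, Bool.not_true, Bool.not_false]
      gcongr

/-- Theorem 4.1 (interior bound): there exists `λ₀ > 0`, depending only on `n, R, T`,
`‖u₀‖_∞`, `‖v₀‖_∞` (here bounded by `Ku`, `Kv`) and the constant `C` from the upper
blow-up rate estimate `e^{u(R,t)}, e^{v(R,t)} ≤ C/(T−t)`, such that for every blow-up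
solution with `max{λ₁,λ₂} ≤ λ₀` there is `A > 0` with
`u(x,t) ≤ log(1/(A(R²−|x|²)²))` and `v(x,t) ≤ log(1/(A(R²−|x|²)²))` on `B_R × (0,T)`. -/
theorem interior_bound {n : ℕ} (hn : 1 ≤ n) {R T C Ku Kv : ℝ}
    (hR : 0 < R) (hT : 0 < T) (hC : 0 < C) :
    ∃ lam0 : ℝ, 0 < lam0 ∧
      ∀ lam1 lam2 : ℝ, 0 < lam1 → 0 < lam2 →
      ∀ u v : EuclideanSpace ℝ (Fin n) → ℝ → ℝ, ∀ u₀ v₀ : EuclideanSpace ℝ (Fin n) → ℝ,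
        AdmissibleData n R u₀ v₀ →
        IsClassicalSolution n R T lam1 lam2 u v u₀ v₀ →
        BlowsUpAt n R T u v →
        (∀ x ∈ closedBall (0 : EuclideanSpace ℝ (Fin n)) R, |u₀ x| ≤ Ku) →
        (∀ x ∈ closedBall (0 : EuclideanSpace ℝ (Fin n)) R, |v₀ x| ≤ Kv) →
        (∀ t ∈ Ioo (0 : ℝ) T, ∀ x : EuclideanSpace ℝ (Fin n), ‖x‖ = R →
          Real.exp (u x t) ≤ C / (T - t) ∧ Real.exp (v x t) ≤ C / (T - t)) →
        max lam1 lam2 ≤ lam0 →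
        ∃ A : ℝ, 0 < A ∧ ∀ x ∈ ball (0 : EuclideanSpace ℝ (Fin n)) R, ∀ t ∈ Ioo (0 : ℝ) T,
          u x t ≤ Real.log (1 / (A * (R ^ 2 - ‖x‖ ^ 2) ^ 2)) ∧
          v x t ≤ Real.log (1 / (A * (R ^ 2 - ‖x‖ ^ 2) ^ 2)) := by
  obtain ⟨lam0, hlam0, A, hA, hbound⟩ :=
    interior_bound_general (n := n) (ι := Bool) T C (max Ku Kv) hR
  refine ⟨lam0, hlam0, fun lam1 lam2 _ _ u v u₀ v₀ _ hsol _ hKu hKv hrate hlam => ⟨A, hA, ?_⟩⟩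
  have hinit : ∀ b, ∀ x ∈ closedBall 0 R, (bif b then u else v) x 0 ≤ max Ku Kv :=
    Bool.forall_bool.2
      ⟨fun x hx => (hsol.init_v x hx).trans_le <| le_max_of_le_right <| (abs_le.1 (hKv x hx)).2,
        fun x hx => (hsol.init_u x hx).trans_le <| le_max_of_le_left <| (abs_le.1 (hKu x hx)).2⟩
  have hcmp := hbound not _ (hsol.isExpSubsolution hR hlam) hinit <|
    Bool.forall_bool.2 ⟨fun t ht x hx => (hrate t ht x hx).2, fun t ht x hx => (hrate t ht x hx).1⟩
  exact fun x hx t ht => ⟨hcmp true x hx t ht, hcmp false x hx t ht⟩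
end
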